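/- For every index h that is the right endpoint of a block of Π(L), the blocks of Π(L) contained in the prefix (l_1, …, l_h) form a valid partition of that prefix whose number of blocks is the maximum possible over all valid partitions of (l_1, …, l_h), and whose last-block total equals y_h. -/

import Mathlib

/-- `pSum L i` is `x_i`: the sum of the first `i` elements of `L` (so `pSum L 0 = 0`). -/
def pSum (L : List ℝ) (i : ℕ) : ℝ := (L.take i).sum

/-- A valid partition of `L`: a partition of `L` into nonempty consecutive blocks
whose totals are non-decreasing from left to right. -/
def ValidPartition (L : List ℝ) (P : List (List ℝ)) : Prop :=
  P.flatten = L ∧ (∀ B ∈ P, B ≠ []) ∧ List.Chain' (· ≤ ·) (P.map List.sum)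

/-- The total of the last block of a partition (`0` for the empty partition). -/
def lastTotal (P : List (List ℝ)) : ℝ := (P.map List.sum).getLastD 0

/-- `wrapLen L` is the wrapping length `y_{|L|}`: the minimum, over all valid
partitions of `L`, of the total of the last block (with `wrapLen [] = 0`,
realized by the empty partition). -/
noncomputable def wrapLen (L : List ℝ) : ℝ :=
  sInf {t | ∃ P, ValidPartition L P ∧ lastTotal P = t}

open Classical in
/-- The recursively defined partition `Π(L)`: for a nonempty `L` of length `i`,
let `h` be the largest index `0 ≤ h < i` with `x_h + y_h ≤ x_i`, take
`(l_{h+1}, …, l_i)` as the last block, and recurse on `(l_1, …, l_h)`. -/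
noncomputable def piPart (L : List ℝ) : List (List ℝ) :=
  if L.length = 0 then []
  else
    let h := Nat.findGreatest
      (fun h => pSum L h + wrapLen (L.take h) ≤ pSum L L.length) (L.length - 1)
    piPart (L.take h) ++ [L.drop h]
termination_by L.length
decreasing_by
  have hle : Nat.findGreatest
      (fun h => pSum L h + wrapLen (L.take h) ≤ pSum L L.length) (L.length - 1)
      ≤ L.length - 1 := Nat.findGreatest_le _
  simp only [List.length_take]
  omega

/-!
A proper prefix `M` of `L` can carry all blocks but the last of a valid partition of `L` only if
`M.sum + wrapLen M ≤ L.sum`, because the last block must total at least as much as the block before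
it, whose total is at least `wrapLen M`. The partition `Π(L)` takes the longest such `M`, so by
induction it is valid and its last block has the smallest possible total. The longest admissible
prefix grows with `L`, hence so does the number of blocks of `Π(L)`; removing the last block of an
arbitrary valid partition therefore shows by induction that `Π(L)` has the most blocks. Finally,
the recursion makes every initial run of blocks of `Π(L)` the partition `Π` of the prefix it covers.
-/

section ValidPartition

variable {L B : List ℝ} {P Q : List (List ℝ)}

@[simp]
theorem lastTotal_nil : lastTotal [] = 0 := rfl

@[simp]
theorem lastTotal_append_singleton (Q : List (List ℝ)) (B : List ℝ) :
    lastTotal (Q ++ [B]) = B.sum := by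
  simp [lastTotal]

theorem validPartition_iff :
    ValidPartition L P ↔
      P.flatten = L ∧ (∀ C ∈ P, C ≠ []) ∧ (P.map List.sum).IsChain (· ≤ ·) :=
  Iff.rfl

theorem validPartition_nil_right_iff : ValidPartition L [] ↔ L = [] := by
  simp [validPartition_iff, eq_comm]

theorem validPartition_append_singleton_iff (hB : 0 ≤ B.sum) :
    ValidPartition L (Q ++ [B]) ↔
      Q.flatten ++ B = L ∧ ValidPartition Q.flatten Q ∧ B ≠ [] ∧ lastTotal Q ≤ B.sum := by
  have isChain_iff : ((Q ++ [B]).map List.sum).IsChain (· ≤ ·) ↔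
      (Q.map List.sum).IsChain (· ≤ ·) ∧ lastTotal Q ≤ B.sum := by
    rcases Q.eq_nil_or_concat' with rfl | ⟨R, C, rfl⟩
    · simp [hB]
    · rw [List.map_append, List.isChain_append]
      simp
  simp only [validPartition_iff, isChain_iff, List.flatten_append, List.flatten_singleton,
    List.forall_mem_append, List.forall_mem_singleton]
  tauto

theorem exists_validPartition (L : List ℝ) : ∃ P, ValidPartition L P := by
  rcases eq_or_ne L [] with rfl | hL
  · exact ⟨[], validPartition_nil_right_iff.2 rfl⟩
  · exact ⟨[L], by simp [validPartition_iff, hL]⟩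

theorem ValidPartition.lastTotal_nonneg (hP : ValidPartition L P) (hL : ∀ l ∈ L, 0 ≤ l) :
    0 ≤ lastTotal P := by
  rcases P.eq_nil_or_concat' with rfl | ⟨Q, B, rfl⟩
  · exact le_rfl
  · rw [lastTotal_append_singleton]
    exact List.sum_nonneg fun l hl => hL l (by simp [← hP.1, hl])

theorem ValidPartition.wrapLen_le_lastTotal (hP : ValidPartition L P) (hL : ∀ l ∈ L, 0 ≤ l) :
    wrapLen L ≤ lastTotal P := by
  refine csInf_le ⟨0, ?_⟩ ⟨P, hP, rfl⟩
  rintro _ ⟨Q, hQ, rfl⟩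
  exact hQ.lastTotal_nonneg hL

end ValidPartition

section LastCut

variable {L M B : List ℝ} {Q : List (List ℝ)}

open Classical in
/-- The index `h` at which the last block of `Π(L)` starts: the largest `h < |L|` with
`x_h + y_h ≤ x_{|L|}`. -/
noncomputable def lastCut (L : List ℝ) : ℕ :=
  Nat.findGreatest (fun h => pSum L h + wrapLen (L.take h) ≤ pSum L L.length) (L.length - 1)

theorem lastCut_lt_length (hL : L ≠ []) : lastCut L < L.length :=
  (Nat.findGreatest_le _).trans_lt (Nat.sub_one_lt (by simpa using hL))

theorem drop_lastCut_ne_nil (hL : L ≠ []) : L.drop (lastCut L) ≠ [] := by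
  simpa using lastCut_lt_length hL

theorem sum_take_lastCut_add_wrapLen_le (hL : ∀ l ∈ L, 0 ≤ l) :
    (L.take (lastCut L)).sum + wrapLen (L.take (lastCut L)) ≤ L.sum := by
  classical
  have wrapLen_nil_nonpos : wrapLen [] ≤ 0 :=
    (validPartition_nil_right_iff.2 rfl).wrapLen_le_lastTotal (by simp)
  have admissible_zero : pSum L 0 + wrapLen (L.take 0) ≤ pSum L L.length := by
    simpa [pSum] using wrapLen_nil_nonpos.trans (List.sum_nonneg hL)
  have admissible_lastCut :
      pSum L (lastCut L) + wrapLen (L.take (lastCut L)) ≤ pSum L L.length :=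
    Nat.findGreatest_spec (P := fun h => pSum L h + wrapLen (L.take h) ≤ pSum L L.length)
      (Nat.zero_le _) admissible_zero
  simpa only [pSum, List.take_length] using admissible_lastCut

theorem prefix_take_lastCut (hML : M <+: L) (hlt : M.length < L.length)
    (h : M.sum + wrapLen M ≤ L.sum) : M <+: L.take (lastCut L) := by
  classical
  rw [List.prefix_take_iff]
  refine ⟨hML, Nat.le_findGreatest (Nat.le_sub_one_of_lt hlt) ?_⟩
  simpa only [pSum, List.take_length, ← List.prefix_iff_eq_take.1 hML] using h

theorem take_lastCut_prefix_take_lastCut (hL : ∀ l ∈ L, 0 ≤ l) (hML : M <+: L) (hM : M ≠ []) :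
    M.take (lastCut M) <+: L.take (lastCut L) := by
  refine prefix_take_lastCut ((M.take_prefix _).trans hML) ?_ ?_
  · rw [List.length_take_of_le (lastCut_lt_length hM).le]
    exact (lastCut_lt_length hM).trans_le hML.length_le
  · exact (sum_take_lastCut_add_wrapLen_le fun l hl => hL l (hML.subset hl)).trans
      (hML.sublist.sum_le_sum hL)

theorem ValidPartition.flatten_prefix_take_lastCut (hP : ValidPartition L (Q ++ [B]))
    (hL : ∀ l ∈ L, 0 ≤ l) : Q.flatten <+: L.take (lastCut L) := by
  have hB : 0 ≤ B.sum := lastTotal_append_singleton Q B ▸ hP.lastTotal_nonneg hL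
  obtain ⟨rfl, hQ, hB_ne, hle⟩ := (validPartition_append_singleton_iff hB).1 hP
  have hwrap : wrapLen Q.flatten ≤ lastTotal Q :=
    hQ.wrapLen_le_lastTotal fun l hl => hL l (List.mem_append_left _ hl)
  refine prefix_take_lastCut (List.prefix_append _ _) ?_ ?_
  · simpa [List.length_pos_iff] using hB_ne
  · simpa using hwrap.trans hle

end LastCut

section PiPart

variable {L M : List ℝ} {P : List (List ℝ)}

@[simp]
theorem piPart_nil : piPart [] = [] := by
  simp [piPart]

theorem piPart_of_ne_nil (hL : L ≠ []) :
    piPart L = piPart (L.take (lastCut L)) ++ [L.drop (lastCut L)] := by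
  rw [piPart, if_neg (by simpa using hL)]
  rfl

theorem piPart_induction {motive : List ℝ → Prop} (nil : motive [])
    (append : ∀ L, L ≠ [] → motive (L.take (lastCut L)) → motive L) (L : List ℝ) : motive L := by
  rcases eq_or_ne L [] with rfl | hL
  · exact nil
  · exact append L hL (piPart_induction nil append (L.take (lastCut L)))
termination_by L.length
decreasing_by simpa using lastCut_lt_length hL

theorem flatten_piPart (L : List ℝ) : (piPart L).flatten = L := by
  induction L using piPart_induction with
  | nil => simp
  | append L hL ih => simp [piPart_of_ne_nil hL, ih]

theorem piPart_flatten_of_prefix (hP : P <+: piPart L) : piPart P.flatten = P := by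
  induction L using piPart_induction with
  | nil => simp_all
  | append L hL ih =>
    rw [piPart_of_ne_nil hL, List.prefix_concat_iff, ← piPart_of_ne_nil hL] at hP
    rcases hP with rfl | hP
    · rw [flatten_piPart]
    · exact ih hP

theorem ValidPartition.lastTotal_piPart_le (hP : ValidPartition L P) (hL : ∀ l ∈ L, 0 ≤ l) :
    lastTotal (piPart L) ≤ lastTotal P := by
  rcases eq_or_ne L [] with rfl | hL_ne
  · simpa using hP.lastTotal_nonneg hL
  rcases P.eq_nil_or_concat' with rfl | ⟨Q, B, rfl⟩
  · exact absurd (validPartition_nil_right_iff.1 hP) hL_ne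
  have hsum : Q.flatten.sum ≤ (L.take (lastCut L)).sum :=
    (hP.flatten_prefix_take_lastCut hL).sublist.sum_le_sum
      fun l hl => hL l (List.mem_of_mem_take hl)
  have hQB : Q.flatten.sum + B.sum = L.sum := by simp [← hP.1]
  rw [piPart_of_ne_nil hL_ne, lastTotal_append_singleton, lastTotal_append_singleton]
  linarith [L.sum_take_add_sum_drop (lastCut L)]

theorem lastTotal_piPart_le_wrapLen (hL : ∀ l ∈ L, 0 ≤ l) : lastTotal (piPart L) ≤ wrapLen L := by
  obtain ⟨P, hP⟩ := exists_validPartition L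
  refine le_csInf ⟨_, P, hP, rfl⟩ ?_
  rintro _ ⟨Q, hQ, rfl⟩
  exact hQ.lastTotal_piPart_le hL

theorem validPartition_piPart (hL : ∀ l ∈ L, 0 ≤ l) : ValidPartition L (piPart L) := by
  induction L using piPart_induction with
  | nil => simp [validPartition_nil_right_iff]
  | append L hL_ne ih =>
    have hM : ∀ l ∈ L.take (lastCut L), 0 ≤ l := fun l hl => hL l (List.mem_of_mem_take hl)
    have hB : 0 ≤ (L.drop (lastCut L)).sum :=
      List.sum_nonneg fun l hl => hL l (List.mem_of_mem_drop hl)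
    have hle : lastTotal (piPart (L.take (lastCut L))) ≤ (L.drop (lastCut L)).sum := by
      linarith [lastTotal_piPart_le_wrapLen hM, sum_take_lastCut_add_wrapLen_le hL,
        L.sum_take_add_sum_drop (lastCut L)]
    rw [piPart_of_ne_nil hL_ne, validPartition_append_singleton_iff hB, flatten_piPart]
    exact ⟨List.take_append_drop _ _, ih hM, drop_lastCut_ne_nil hL_ne, hle⟩

theorem lastTotal_piPart (hL : ∀ l ∈ L, 0 ≤ l) : lastTotal (piPart L) = wrapLen L :=
  (lastTotal_piPart_le_wrapLen hL).antisymm ((validPartition_piPart hL).wrapLen_le_lastTotal hL)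

theorem length_piPart_le_of_prefix (hL : ∀ l ∈ L, 0 ≤ l) (hML : M <+: L) :
    (piPart M).length ≤ (piPart L).length := by
  induction L using piPart_induction generalizing M with
  | nil => simp_all
  | append L hL_ne ih =>
    rcases eq_or_ne M [] with rfl | hM
    · simp
    have hle := ih (fun l hl => hL l (List.mem_of_mem_take hl))
      (take_lastCut_prefix_take_lastCut hL hML hM)
    simpa [piPart_of_ne_nil hM, piPart_of_ne_nil hL_ne] using hle

theorem ValidPartition.length_le_length_piPart (hP : ValidPartition L P) (hL : ∀ l ∈ L, 0 ≤ l) :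
    P.length ≤ (piPart L).length := by
  induction P using List.reverseRecOn generalizing L with
  | nil => simp
  | append_singleton Q B ih =>
    have hprefix := hP.flatten_prefix_take_lastCut hL
    have hB : 0 ≤ B.sum := lastTotal_append_singleton Q B ▸ hP.lastTotal_nonneg hL
    obtain ⟨hQB, hQ, hB_ne, -⟩ := (validPartition_append_singleton_iff hB).1 hP
    have hL_ne : L ≠ [] := by simp [← hQB, hB_ne]
    have hM : ∀ l ∈ L.take (lastCut L), 0 ≤ l := fun l hl => hL l (List.mem_of_mem_take hl)
    have hle : Q.length ≤ (piPart (L.take (lastCut L))).length :=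
      (ih hQ fun l hl => hM l (hprefix.subset hl)).trans (length_piPart_le_of_prefix hM hprefix)
    simpa [piPart_of_ne_nil hL_ne] using hle

end PiPart

/-- For every index `h` that is the right endpoint of a block of
`Π(L)` (i.e. `h` is the length of the concatenation of the first `k` blocks of
`Π(L)`, for some `1 ≤ k ≤ |Π(L)|`), the blocks of `Π(L)` contained in the prefix
`(l_1, …, l_h)` — namely the first `k` blocks — form a valid partition of that
prefix whose number of blocks is the maximum possible over all valid partitions
of `(l_1, …, l_h)`, and whose last-block total equals `y_h`. -/
theorem stmt_9 (L : List ℝ) (hL : ∀ l ∈ L, 0 < l) (k : ℕ) (hk1 : 1 ≤ k)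
    (hk : k ≤ (piPart L).length) :
    ValidPartition (L.take (((piPart L).take k).flatten.length)) ((piPart L).take k) ∧
    (∀ P', ValidPartition (L.take (((piPart L).take k).flatten.length)) P' →
      P'.length ≤ ((piPart L).take k).length) ∧
    lastTotal ((piPart L).take k) =
      wrapLen (L.take (((piPart L).take k).flatten.length)) := by
  set Q := (piPart L).take k
  have hQ : Q <+: piPart L := List.take_prefix k _
  have hQL : Q.flatten <+: L := by simpa only [flatten_piPart] using hQ.flatten
  have hpi : piPart Q.flatten = Q := piPart_flatten_of_prefix hQ
  have hnonneg : ∀ l ∈ Q.flatten, 0 ≤ l := fun l hl => (hL l (hQL.subset hl)).le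
  rw [← List.prefix_iff_eq_take.1 hQL]
  refine ⟨?_, fun P' hP' => ?_, ?_⟩
  · simpa only [hpi] using validPartition_piPart hnonneg
  · simpa only [hpi] using hP'.length_le_length_piPart hnonneg
  · simpa only [hpi] using lastTotal_piPart hnonneg
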